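/- arXiv:2405.05593 — 2 statements merged into one kernel-verified Lean document; each statement's English description precedes it below -/
import Mathlib

section
/- Assume 0 < a₁ < a₂ (so that m > 1), b < 0, and p₁ > 2, and assume the shape conditions p₁ − 3 ≤ −h*/a₁ ≤ p₁ − 2 and −h*/a₁ + 3 ≤ T, where h* := b/(m − 1) < 0. Then the solution x(·,h*) with constant initial function ≡ h* is T-periodic, i.e. x(t + T, h*) = x(t, h*) for all t ≥ 0, and it is slowly oscillating with exactly two zeros in each period interval (nT, (n+1)T]. -/
/-!
The solution can be computed explicitly. Put `T = p1 + p2` and `z = -h*/a1`. As long as the delayed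
value is negative the solution increases with slope `A0`, and as long as it is positive it decreases
with slope `-A0`. Starting from `h* < 0` at a multiple of `T`, after a unit of time on which the
solution is negative, it therefore rises through its first zero `z` up to the time `z + 1`, falls
through its second zero `z + 2` down to the time `z + 3`, and then rises until the time `T`. The
shape conditions say that the coefficient switches from `a1` to `a2` between `z + 2` and `z + 3`,
and that `z + 3` is at most `T`. The value reached at time `T` is `m h* - b`, which is `h*` because
`h* = b/(m-1)`; and it is approached from below, so the solution is negative on `(z + 2, T]`, an
interval of length at least one. By induction the same segment, `profile`, is repeated in each period.

`affine_steps` (the method of steps on an interval with constant coefficient) produces the affine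
pieces, `eq_profile` glues them over one period, and `eq_profile_all` is the induction over periods.
Periodicity, the sequence of zeros and their number per period are read off from the signs of
`profile`.
-/

open Set Filter

/-- `t mod T`, i.e. `t - T⌊t/T⌋ ∈ [0,T)` for `T > 0`. -/
noncomputable def rmod (T t : ℝ) : ℝ := t - T * (⌊t / T⌋ : ℝ)

/-- `f₀(x) = -sign x`. -/
noncomputable def f0 (x : ℝ) : ℝ := -Real.sign x

/-- The `(p₁+p₂)`-periodic step coefficient. -/
noncomputable def A0 (p1 p2 a1 a2 t : ℝ) : ℝ :=
  if rmod (p1 + p2) t < p1 then a1 else a2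

/-- `x` is the solution on `[-1,∞)` of `x'(t) = a(t) f(x(t-1))` with initial function `φ`. -/
def IsSolution (a f φ x : ℝ → ℝ) : Prop :=
  ContinuousOn x (Ici (-1 : ℝ)) ∧ (∀ s ∈ Icc (-1 : ℝ) 0, x s = φ s) ∧
    ∀ t ≥ (0 : ℝ), x t = φ 0 + ∫ s in (0:ℝ)..t, a s * f (x (s - 1))

/-- Solution with constant initial function `≡ h`. -/
def IsSolutionC (a f : ℝ → ℝ) (h : ℝ) (x : ℝ → ℝ) : Prop :=
  IsSolution a f (fun _ => h) x

/-- `x` is slowly oscillating: it has an increasing unbounded sequence of positive zeros whose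
consecutive differences exceed the delay `1`, and between consecutive zeros `x` is nonzero with
alternating signs. -/
def SlowlyOscillating (x : ℝ → ℝ) : Prop :=
  ∃ t : ℕ → ℝ, StrictMono t ∧ (∀ n, 0 < t n) ∧ Tendsto t atTop atTop ∧
    (∀ n, x (t n) = 0) ∧ (∀ n, 1 < t (n + 1) - t n) ∧
    (∀ n, ∀ s ∈ Ioo (t n) (t (n + 1)), x s ≠ 0) ∧
    (∀ n, ∀ s ∈ Ioo (t n) (t (n + 1)), ∀ u ∈ Ioo (t (n + 1)) (t (n + 2)), x s * x u < 0)

/-! ### The periodic coefficient and the feedback function -/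

lemma rmod_add {T u : ℝ} (hT : 0 < T) (h0 : 0 ≤ u) (h1 : u < T) (n : ℕ) :
    rmod T ((n : ℝ) * T + u) = u := by
  have : ⌊((n : ℝ) * T + u) / T⌋ = (n : ℤ) := by
    rw [Int.floor_eq_iff]
    push_cast
    constructor
    · rw [le_div_iff₀ hT]; linarith
    · rw [div_lt_iff₀ hT]; linarith
  unfold rmod
  rw [this]
  push_cast
  ring

lemma A0_of_lt {p1 p2 a1 a2 : ℝ} (hp1 : 0 < p1) (hp2 : 0 < p2) (n : ℕ) {s : ℝ}
    (h0 : (n : ℝ) * (p1 + p2) ≤ s) (h1 : s < (n : ℝ) * (p1 + p2) + p1) :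
    A0 p1 p2 a1 a2 s = a1 := by
  obtain ⟨u, rfl⟩ : ∃ u, s = (n : ℝ) * (p1 + p2) + u := ⟨s - n * (p1 + p2), by ring⟩
  unfold A0
  rw [rmod_add (by linarith) (by linarith) (by linarith), if_pos (by linarith)]

lemma A0_of_ge {p1 p2 a1 a2 : ℝ} (hp1 : 0 < p1) (hp2 : 0 < p2) (n : ℕ) {s : ℝ}
    (h0 : (n : ℝ) * (p1 + p2) + p1 ≤ s) (h1 : s < (n : ℝ) * (p1 + p2) + (p1 + p2)) :
    A0 p1 p2 a1 a2 s = a2 := by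
  obtain ⟨u, rfl⟩ : ∃ u, s = (n : ℝ) * (p1 + p2) + u := ⟨s - n * (p1 + p2), by ring⟩
  unfold A0
  rw [rmod_add (by linarith) (by linarith) (by linarith), if_neg (by linarith)]

lemma measurable_A0 (p1 p2 a1 a2 : ℝ) : Measurable (A0 p1 p2 a1 a2) := by
  have h : Measurable (rmod (p1 + p2)) := by
    have hfl : Measurable fun t : ℝ => ((⌊t / (p1 + p2)⌋ : ℤ) : ℝ) :=
      (measurable_from_top (f := fun k : ℤ => (k : ℝ))).comp
        (Int.measurable_floor.comp (measurable_id.div_const _))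
    exact measurable_id.sub (hfl.const_mul _)
  exact Measurable.ite (measurableSet_lt h measurable_const) measurable_const measurable_const

lemma measurable_f0 : Measurable f0 := by
  have h : Measurable Real.sign := by
    unfold Real.sign
    exact Measurable.ite (measurableSet_lt measurable_id measurable_const) measurable_const
      (Measurable.ite (measurableSet_lt measurable_const measurable_id) measurable_const
        measurable_const)
  exact h.neg

lemma abs_f0_le (y : ℝ) : |f0 y| ≤ 1 := by
  unfold f0
  rcases Real.sign_apply_eq y with h | h | h <;> rw [h] <;> norm_num

/-- `f0` gives negative feedback: it returns the sign `σ` opposite to that of its argument. -/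
lemma f0_eq {σ y : ℝ} (hσ : σ = 1 ∨ σ = -1) (h : σ * y < 0) : f0 y = σ := by
  unfold f0
  rcases hσ with rfl | rfl
  · rw [Real.sign_of_neg (by linarith)]; norm_num
  · rw [Real.sign_of_pos (by linarith)]

/-! ### Affine pieces of solutions -/

/-- The integral equation may be restarted at any `c ≥ 0`. The integrand is bounded and
measurable, hence integrable; this is what makes the integrals additive. -/
lemma restart {p1 p2 a1 a2 h : ℝ} {x : ℝ → ℝ} (hx : IsSolutionC (A0 p1 p2 a1 a2) f0 h x)
    {c d : ℝ} (hc : 0 ≤ c) (hcd : c ≤ d) :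
    x d = x c + ∫ s in c..d, A0 p1 p2 a1 a2 s * f0 (x (s - 1)) := by
  obtain ⟨hcont, -, heq⟩ := hx
  have key : ∀ t, 0 ≤ t → IntervalIntegrable (fun s => A0 p1 p2 a1 a2 s * f0 (x (s - 1)))
      MeasureTheory.volume 0 t := by
    intro t ht
    rw [intervalIntegrable_iff_integrableOn_Ioc_of_le ht]
    have hm : AEMeasurable (fun s => x (s - 1)) (MeasureTheory.volume.restrict (Ioc 0 t)) := by
      refine ContinuousOn.aemeasurable ?_ measurableSet_Ioc
      refine hcont.comp (by fun_prop) ?_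
      intro s hs
      have := hs.1
      simp only [mem_Ici]
      linarith
    refine MeasureTheory.IntegrableOn.of_bound (C := |a1| + |a2|) (by simp) ?_ ?_
    · exact ((measurable_A0 p1 p2 a1 a2).aemeasurable.mul
        (measurable_f0.comp_aemeasurable hm)).aestronglyMeasurable
    · refine Filter.Eventually.of_forall fun s => ?_
      rw [Real.norm_eq_abs, abs_mul]
      have h1 : |A0 p1 p2 a1 a2 s| ≤ |a1| + |a2| := by
        unfold A0
        split_ifs
        · linarith [abs_nonneg a2]
        · linarith [abs_nonneg a1]
      calc _ ≤ (|a1| + |a2|) * 1 :=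
            mul_le_mul h1 (abs_f0_le _) (abs_nonneg _) (by positivity)
        _ = _ := mul_one _
  rw [heq d (hc.trans hcd), heq c hc,
    ← intervalIntegral.integral_interval_sub_left (key d (hc.trans hcd)) (key c hc)]
  ring

/-- Where the coefficient is constant and the delayed value has a constant sign, the solution is
affine. -/
lemma affine_step {p1 p2 a1 a2 h : ℝ} {x : ℝ → ℝ} (hx : IsSolutionC (A0 p1 p2 a1 a2) f0 h x)
    {c d a σ : ℝ} (hc : 0 ≤ c) (hcd : c ≤ d) (hσ : σ = 1 ∨ σ = -1)
    (hA : ∀ s, c < s → s < d → A0 p1 p2 a1 a2 s = a)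
    (hs : ∀ s, c - 1 < s → s < d - 1 → σ * x s < 0) :
    x d = x c + σ * a * (d - c) := by
  rw [restart hx hc hcd]
  have : ∫ s in c..d, A0 p1 p2 a1 a2 s * f0 (x (s - 1)) = ∫ _ in c..d, a * σ := by
    rw [intervalIntegral.integral_of_le hcd, intervalIntegral.integral_of_le hcd,
      MeasureTheory.integral_Ioc_eq_integral_Ioo, MeasureTheory.integral_Ioc_eq_integral_Ioo]
    refine MeasureTheory.setIntegral_congr_fun measurableSet_Ioo fun s hs' => ?_
    have h2 := hs'.1
    have h3 := hs'.2
    rw [hA s h2 h3, f0_eq hσ (hs (s - 1) (by linarith) (by linarith))]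
  rw [this, intervalIntegral.integral_const, smul_eq_mul]
  ring

/-- The method of steps: if `σ * x` is negative on `(c-1, c]`, then `x` keeps slope `σ * a` from `c`
to `d`, provided the resulting line does not make `σ * x` positive before time `d - 1`. -/
lemma affine_steps {p1 p2 a1 a2 h : ℝ} {x : ℝ → ℝ} (hx : IsSolutionC (A0 p1 p2 a1 a2) f0 h x)
    {c d a σ : ℝ} (hc : 0 ≤ c) (ha : 0 < a) (hσ : σ = 1 ∨ σ = -1)
    (hA : ∀ s, c < s → s < d → A0 p1 p2 a1 a2 s = a)
    (hs : ∀ s, c - 1 < s → s ≤ c → σ * x s < 0)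
    (hend : σ * x c + a * (d - 1 - c) ≤ 0) {t : ℝ} (ht0 : c ≤ t) (ht1 : t ≤ d) :
    x t = x c + σ * a * (t - c) := by
  have hσ2 : σ * σ = 1 := by rcases hσ with rfl | rfl <;> norm_num
  have main : ∀ k : ℕ, ∀ t, c ≤ t → t ≤ d → t ≤ c + k → x t = x c + σ * a * (t - c) := by
    intro k
    induction k with
    | zero =>
      intro t h0 _ h2
      have : t = c := by push_cast at h2; linarith
      rw [this]; ring
    | succ k ih =>
      intro t h0 h1 h2
      push_cast at h2
      refine affine_step hx hc h0 hσ (fun s h3 h4 => hA s h3 (by linarith)) fun s h3 h4 => ?_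
      rcases le_or_gt s c with h5 | h5
      · exact hs s h3 h5
      · rw [ih s h5.le (by linarith) (by linarith)]
        have h6 : a * (s - c) < a * (d - 1 - c) := by
          apply mul_lt_mul_of_pos_left _ ha; linarith
        have h7 : σ * (x c + σ * a * (s - c)) = σ * x c + a * (s - c) := by
          linear_combination a * (s - c) * hσ2
        linarith
  obtain ⟨k, hk⟩ := exists_nat_ge (t - c)
  exact main k t ht0 ht1 (by linarith)

/-! ### The solution over one period -/

/-- The segment of the solution over one period, in terms of its first zero `z` (so that its
initial value is `-a1 * z`): slopes `a1, -a1, -a2, a2`, with corners at `z+1`, `p1`, `z+3`. -/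
noncomputable def profile (p1 a1 a2 z u : ℝ) : ℝ :=
  if u ≤ z + 1 then a1 * (u - z)
  else if u ≤ p1 then a1 * (z + 2 - u)
  else if u ≤ z + 3 then a1 * (z + 2 - p1) - a2 * (u - p1)
  else a1 * (z + 2 - p1) - a2 * (z + 3 - p1) + a2 * (u - (z + 3))

section profile

variable {p1 p2 a1 a2 z : ℝ}

/-- `profile` closes up after one period; `hb` is the fixed point equation `h* (m-1) = b`
written for `z = -h*/a1`. -/
lemma profile_end
    (hb : a1 * (p1 - 2) + a2 * (6 - 2 * p1 - p2) = 2 * a1 * z - 2 * a2 * z) :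
    a1 * (z + 2 - p1) - a2 * (z + 3 - p1) + a2 * (p1 + p2 - (z + 3)) = -(a1 * z) := by
  linear_combination -hb

lemma profile_neg_left (ha1 : 0 < a1) {u : ℝ} (hu : u < z) : profile p1 a1 a2 z u < 0 := by
  unfold profile
  rw [if_pos (by linarith)]
  exact mul_neg_of_pos_of_neg ha1 (by linarith)

lemma profile_pos (ha1 : 0 < a1) (hs2 : z ≤ p1 - 2) {u : ℝ} (h0 : z < u) (h1 : u < z + 2) :
    0 < profile p1 a1 a2 z u := by
  unfold profile
  split_ifs
  · exact mul_pos ha1 (by linarith)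
  · exact mul_pos ha1 (by linarith)
  · linarith
  · linarith

lemma profile_neg_right (ha1 : 0 < a1) (ha2 : 0 < a2) (hz0 : 0 < z) (hs2 : z ≤ p1 - 2)
    (hb : a1 * (p1 - 2) + a2 * (6 - 2 * p1 - p2) = 2 * a1 * z - 2 * a2 * z)
    {u : ℝ} (h0 : z + 2 < u) (h1 : u ≤ p1 + p2) : profile p1 a1 a2 z u < 0 := by
  unfold profile
  have h2 : 0 < a1 * z := mul_pos ha1 hz0
  split_ifs with h3 h4 h5
  · linarith
  · exact mul_neg_of_pos_of_neg ha1 (by linarith)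
  · have : a1 * (z + 2 - p1) ≤ 0 := mul_nonpos_of_nonneg_of_nonpos ha1.le (by linarith)
    have : 0 < a2 * (u - p1) := mul_pos ha2 (by linarith)
    linarith
  · have : a2 * u ≤ a2 * (p1 + p2) := mul_le_mul_of_nonneg_left h1 ha2.le
    linarith

lemma profile_zero_left : profile p1 a1 a2 z z = 0 := by
  unfold profile
  rw [if_pos (by linarith)]; ring

lemma profile_zero_right (hs2 : z ≤ p1 - 2) : profile p1 a1 a2 z (z + 2) = 0 := by
  unfold profile
  rw [if_neg (by linarith), if_pos (by linarith)]; ring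

/-- One turn of the period map: if the solution has value `-a1 * z` at time `nT` and was negative
during the preceding unit of time, then it follows `profile` up to time `(n+1)T`. -/
lemma eq_profile {h : ℝ} {x : ℝ → ℝ} (hx : IsSolutionC (A0 p1 p2 a1 a2) f0 h x)
    (ha1 : 0 < a1) (ha2 : 0 < a2) (hp2 : 0 < p2) (hz0 : 0 < z)
    (hs1 : p1 - 3 ≤ z) (hs2 : z ≤ p1 - 2) (hs3 : z + 3 ≤ p1 + p2)
    (hb : a1 * (p1 - 2) + a2 * (6 - 2 * p1 - p2) = 2 * a1 * z - 2 * a2 * z)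
    (n : ℕ) {c : ℝ} (hc : c = (n : ℝ) * (p1 + p2)) (hxc : x c = -(a1 * z))
    (hneg : ∀ s, c - 1 < s → s ≤ c → x s < 0) {u : ℝ} (hu0 : 0 ≤ u) (hu1 : u ≤ p1 + p2) :
    x (c + u) = profile p1 a1 a2 z u := by
  have hc0 : 0 ≤ c := by
    have : 0 < p1 + p2 := by linarith
    rw [hc]
    positivity
  have hA1 : ∀ s, c < s → s < c + p1 → A0 p1 p2 a1 a2 s = a1 := fun s h0 h1 =>
    A0_of_lt (by linarith) hp2 n (hc ▸ h0.le) (hc ▸ h1)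
  have hA2 : ∀ s, c + p1 ≤ s → s < c + (p1 + p2) → A0 p1 p2 a1 a2 s = a2 := fun s h0 h1 =>
    A0_of_ge (by linarith) hp2 n (hc ▸ h0) (hc ▸ h1)
  have e1 : ∀ u, 0 ≤ u → u ≤ z + 1 → x (c + u) = a1 * (u - z) := by
    intro u h0 h1
    rw [affine_steps hx (c := c) (d := c + (z + 1)) (σ := 1) (t := c + u) hc0 ha1 (Or.inl rfl)
      (fun s h2 h3 => hA1 s h2 (by linarith)) (fun s h2 h3 => by linarith [hneg s h2 h3])
      (by rw [hxc]; linarith) (by linarith) (by linarith), hxc]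
    ring
  have v1 : x (c + (z + 1)) = a1 := by rw [e1 _ (by linarith) le_rfl]; ring
  have e2 : ∀ u, z + 1 ≤ u → u ≤ p1 → x (c + u) = a1 * (z + 2 - u) := by
    intro u h0 h1
    rw [affine_steps hx (c := c + (z + 1)) (d := c + p1) (σ := -1) (t := c + u) (by linarith) ha1
      (Or.inr rfl) (fun s h2 h3 => hA1 s (by linarith) h3) ?_ ?_ (by linarith) (by linarith), v1]
    · ring
    · intro s h2 h3
      have := e1 (s - c) (by linarith) (by linarith)
      rw [add_sub_cancel] at this
      have : 0 < a1 * (s - c - z) := mul_pos ha1 (by linarith)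
      linarith
    · rw [v1]
      have : a1 * (p1 - z - 3) ≤ 0 := mul_nonpos_of_nonneg_of_nonpos ha1.le (by linarith)
      linarith
  have v2 : x (c + p1) = a1 * (z + 2 - p1) := e2 _ (by linarith) le_rfl
  have e3 : ∀ u, p1 ≤ u → u ≤ z + 3 →
      x (c + u) = a1 * (z + 2 - p1) - a2 * (u - p1) := by
    intro u h0 h1
    rw [affine_step hx (c := c + p1) (d := c + u) (σ := -1) (a := a2) (by linarith) (by linarith)
      (Or.inr rfl) (fun s h2 h3 => hA2 s h2.le (by linarith)) ?_, v2]
    · ring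
    · intro s h2 h3
      have := e2 (s - c) (by linarith) (by linarith)
      rw [add_sub_cancel] at this
      have : 0 < a1 * (z + 2 - (s - c)) := mul_pos ha1 (by linarith)
      linarith
  have v3 := e3 (z + 3) (by linarith) le_rfl
  have hend := profile_end hb
  have haz : 0 < a1 * z := mul_pos ha1 hz0
  have e4 : ∀ u, z + 3 ≤ u → u ≤ p1 + p2 →
      x (c + u) = a1 * (z + 2 - p1) - a2 * (z + 3 - p1) + a2 * (u - (z + 3)) := by
    intro u h0 h1
    rw [affine_steps hx (c := c + (z + 3)) (d := c + (p1 + p2)) (σ := 1) (t := c + u)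
      (by linarith) ha2 (Or.inl rfl) (fun s h2 h3 => hA2 s (by linarith) h3) ?_ ?_
      (by linarith) (by linarith), v3]
    · ring
    · intro s h2 h3
      rcases le_or_gt s (c + p1) with h4 | h4
      · have := e2 (s - c) (by linarith) (by linarith)
        rw [add_sub_cancel] at this
        have : a1 * (z + 2 - (s - c)) < 0 := mul_neg_of_pos_of_neg ha1 (by linarith)
        linarith
      · have := e3 (s - c) (by linarith) (by linarith)
        rw [add_sub_cancel] at this
        have : a1 * (z + 2 - p1) ≤ 0 := mul_nonpos_of_nonneg_of_nonpos ha1.le (by linarith)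
        have : 0 < a2 * (s - c - p1) := mul_pos ha2 (by linarith)
        linarith
    · rw [v3]
      linarith
  unfold profile
  split_ifs with h1 h2 h3
  · exact e1 u hu0 h1
  · exact e2 u (by linarith) h2
  · exact e3 u (by linarith) h3
  · exact e4 u (by linarith) hu1

/-- The solution repeats `profile` in every period. -/
lemma eq_profile_all {x : ℝ → ℝ} (hx : IsSolutionC (A0 p1 p2 a1 a2) f0 (-(a1 * z)) x)
    (ha1 : 0 < a1) (ha2 : 0 < a2) (hp2 : 0 < p2) (hz0 : 0 < z)
    (hs1 : p1 - 3 ≤ z) (hs2 : z ≤ p1 - 2) (hs3 : z + 3 ≤ p1 + p2)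
    (hb : a1 * (p1 - 2) + a2 * (6 - 2 * p1 - p2) = 2 * a1 * z - 2 * a2 * z)
    (n : ℕ) {u : ℝ} (hu0 : 0 ≤ u) (hu1 : u ≤ p1 + p2) :
    x ((n : ℝ) * (p1 + p2) + u) = profile p1 a1 a2 z u := by
  have haz : 0 < a1 * z := mul_pos ha1 hz0
  have main : ∀ n : ℕ, x ((n : ℝ) * (p1 + p2)) = -(a1 * z) ∧
      ∀ s, (n : ℝ) * (p1 + p2) - 1 < s → s ≤ (n : ℝ) * (p1 + p2) → x s < 0 := by
    intro n
    induction n with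
    | zero =>
      have h0 : ∀ s, -1 ≤ s → s ≤ 0 → x s = -(a1 * z) := fun s h1 h2 => hx.2.1 s ⟨h1, h2⟩
      simp only [Nat.cast_zero, zero_mul]
      refine ⟨h0 0 (by norm_num) le_rfl, fun s h1 h2 => ?_⟩
      rw [h0 s (by linarith) h2]
      linarith
    | succ n ih =>
      have hp := fun u => eq_profile (u := u) hx ha1 ha2 hp2 hz0 hs1 hs2 hs3 hb n rfl ih.1 ih.2
      have hcast : ((n + 1 : ℕ) : ℝ) * (p1 + p2) = (n : ℝ) * (p1 + p2) + (p1 + p2) := by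
        push_cast; ring
      have hn : ∀ s, ((n + 1 : ℕ) : ℝ) * (p1 + p2) - 1 < s → s ≤ ((n + 1 : ℕ) : ℝ) * (p1 + p2) →
          x s < 0 := by
        rw [hcast]
        intro s h1 h2
        have h3 := hp (s - n * (p1 + p2)) (by linarith) (by linarith)
        rw [add_sub_cancel] at h3
        rw [h3]
        exact profile_neg_right ha1 ha2 hz0 hs2 hb (by linarith) (by linarith)
      refine ⟨?_, hn⟩
      rw [hcast, hp _ (by linarith) le_rfl, ← profile_end hb]
      unfold profile
      split_ifs with h1 h2 h3
      · linarith
      · linarith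
      -- at the corner `z + 3 = p1 + p2` the two neighbouring formulas agree
      · have : z + 3 = p1 + p2 := by linarith
        rw [this]; ring
      · rfl
  exact eq_profile hx ha1 ha2 hp2 hz0 hs1 hs2 hs3 hb n rfl (main n).1 (main n).2 hu0 hu1

end profile

/-! ### Zeros and slow oscillation -/

/-- The zeros in increasing order: `kT + z` at index `2k` and `kT + z + 2` at index `2k + 1`. -/
noncomputable def zeroSeq (T z : ℝ) (n : ℕ) : ℝ :=
  ((n / 2 : ℕ) : ℝ) * T + z + 2 * ((n % 2 : ℕ) : ℝ)

lemma zeroSeq_even (T z : ℝ) (k : ℕ) : zeroSeq T z (2 * k) = (k : ℝ) * T + z := by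
  unfold zeroSeq
  rw [show 2 * k / 2 = k by omega, show 2 * k % 2 = 0 by omega]
  simp

lemma zeroSeq_odd (T z : ℝ) (k : ℕ) : zeroSeq T z (2 * k + 1) = (k : ℝ) * T + z + 2 := by
  unfold zeroSeq
  rw [show (2 * k + 1) / 2 = k by omega, show (2 * k + 1) % 2 = 1 by omega]
  simp

lemma zeroSeq_even_succ (T z : ℝ) (k : ℕ) :
    zeroSeq T z (2 * k + 1 + 1) = (k : ℝ) * T + T + z := by
  rw [show 2 * k + 1 + 1 = 2 * (k + 1) by ring, zeroSeq_even]
  push_cast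
  ring

lemma one_lt_zeroSeq_sub {T z : ℝ} (hT : 3 < T) (n : ℕ) :
    1 < zeroSeq T z (n + 1) - zeroSeq T z n := by
  rcases Nat.even_or_odd' n with ⟨k, rfl | rfl⟩
  · rw [zeroSeq_even, zeroSeq_odd]; linarith
  · rw [zeroSeq_even_succ, zeroSeq_odd]; linarith

/-- A function that repeats, on each `[nT, (n+1)T]`, a segment which is negative, positive, negative
with changes of sign exactly at `z` and `z + 2`, is slowly oscillating. -/
lemma slowlyOscillating_of_profile {T z : ℝ} {w x : ℝ → ℝ} (hz0 : 0 < z) (hT : z + 3 ≤ T)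
    (hx : ∀ (n : ℕ) (u : ℝ), 0 ≤ u → u ≤ T → x ((n : ℝ) * T + u) = w u)
    (hl : ∀ u, u < z → w u < 0) (hzl : w z = 0) (hm : ∀ u, z < u → u < z + 2 → 0 < w u)
    (hzr : w (z + 2) = 0) (hr : ∀ u, z + 2 < u → u ≤ T → w u < 0) : SlowlyOscillating x := by
  have hgap := one_lt_zeroSeq_sub (T := T) (z := z) (by linarith)
  have hsign : ∀ n, ∀ s ∈ Ioo (zeroSeq T z n) (zeroSeq T z (n + 1)), 0 < (-1) ^ n * x s := by
    intro n s hs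
    rcases Nat.even_or_odd' n with ⟨k, rfl | rfl⟩
    · rw [zeroSeq_even, zeroSeq_odd] at hs
      have h1 := hs.1
      have h2 := hs.2
      have h3 := hx k (s - k * T) (by linarith) (by linarith)
      rw [add_sub_cancel] at h3
      rw [h3, pow_mul]
      have := hm (s - k * T) (by linarith) (by linarith)
      norm_num
      exact this
    · rw [zeroSeq_odd, zeroSeq_even_succ] at hs
      have h1 := hs.1
      have h2 := hs.2
      have h4 : x s < 0 := by
        -- the gap from `kT + z + 2` to `(k+1)T + z` straddles two periods
        rcases le_or_gt s (k * T + T) with h5 | h5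
        · have h3 := hx k (s - k * T) (by linarith) (by linarith)
          rw [add_sub_cancel] at h3
          rw [h3]
          exact hr _ (by linarith) (by linarith)
        · have h3 := hx (k + 1) (s - (k + 1 : ℕ) * T) (by push_cast; linarith)
            (by push_cast; linarith)
          rw [add_sub_cancel] at h3
          rw [h3]
          exact hl _ (by push_cast; linarith)
      rw [pow_succ, pow_mul]
      norm_num
      exact h4
  have hge : ∀ n : ℕ, (n : ℝ) + z ≤ zeroSeq T z n := by
    intro n
    induction n with
    | zero => simp [zeroSeq]
    | succ n ih => push_cast; linarith [hgap n]
  refine ⟨zeroSeq T z, strictMono_nat_of_lt_succ fun n => by linarith [hgap n],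
    fun n => ?_, ?_, fun n => ?_, hgap, fun n s hs h0 => ?_, fun n s hs u hu => ?_⟩
  · have : (0 : ℝ) ≤ n := Nat.cast_nonneg n
    linarith [hge n]
  · exact tendsto_atTop_mono (fun n => by linarith [hge n]) tendsto_natCast_atTop_atTop
  · rcases Nat.even_or_odd' n with ⟨k, rfl | rfl⟩
    · rw [zeroSeq_even, hx k z (by linarith) (by linarith), hzl]
    · rw [zeroSeq_odd, add_assoc, hx k (z + 2) (by linarith) (by linarith), hzr]
  · have := hsign n s hs
    rw [h0, mul_zero] at this
    exact lt_irrefl _ this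
  · have h1 := mul_pos (hsign n s hs) (hsign (n + 1) u hu)
    have h2 : ((-1 : ℝ) ^ n) * (-1) ^ n = 1 := by
      rw [← mul_pow]; norm_num
    have h3 : (-1 : ℝ) ^ n * x s * ((-1) ^ (n + 1) * x u) = -(x s * x u) := by
      rw [pow_succ]
      linear_combination -(x s * x u) * h2
    linarith

/-! ### Periodicity and the number of zeros -/

/-- in the unstable case `0 < a₁ < a₂` (`m > 1`), `b < 0`, `p₁ > 2`, with the
shape conditions at `h* = b/(m-1) < 0`, the solution with constant initial function `≡ h*` is
`T`-periodic and slowly oscillating with exactly two zeros in each interval `(nT, (n+1)T]`. -/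
theorem stmt6 (p1 p2 a1 a2 m b hstar : ℝ)
    (ha1 : 0 < a1) (ha12 : a1 < a2) (hp1 : 2 < p1) (hp2 : 0 < p2) (hT : 1 < p1 + p2)
    (hm : m = 2 * a2 / a1 - 1) (hb : b = a1 * (p1 - 2) + a2 * (6 - 2 * p1 - p2))
    (hbneg : b < 0) (hhstar : hstar = b / (m - 1)) (hstarneg : hstar < 0)
    (hshape1 : p1 - 3 ≤ -hstar / a1) (hshape2 : -hstar / a1 ≤ p1 - 2)
    (hshape3 : -hstar / a1 + 3 ≤ p1 + p2)
    (x : ℝ → ℝ) (hx : IsSolutionC (A0 p1 p2 a1 a2) f0 hstar x) :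
    (∀ t ≥ (0 : ℝ), x (t + (p1 + p2)) = x t) ∧
    SlowlyOscillating x ∧
    ∀ n : ℕ, {s ∈ Ioc ((n : ℝ) * (p1 + p2)) (((n : ℝ) + 1) * (p1 + p2)) | x s = 0}.encard = 2 := by
  have ha2 : 0 < a2 := ha1.trans ha12
  obtain ⟨z, hz⟩ : ∃ z, z = -hstar / a1 := ⟨_, rfl⟩
  rw [← hz] at hshape1 hshape2 hshape3
  have hz0 : 0 < z := by rw [hz]; exact div_pos (by linarith) ha1
  have hh : hstar = -(a1 * z) := by rw [hz]; field_simp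
  have hm1 : m - 1 ≠ 0 := by
    rintro h0
    rw [h0, div_zero] at hhstar
    linarith
  -- the fixed point equation `h* (m - 1) = b`, expressed through `z`
  have hbz : a1 * (p1 - 2) + a2 * (6 - 2 * p1 - p2) = 2 * a1 * z - 2 * a2 * z := by
    rw [eq_div_iff hm1, hh, hm] at hhstar
    rw [← hb, ← hhstar]
    field_simp
    ring
  rw [hh] at hx
  have hT0 : 0 < p1 + p2 := by linarith
  have hall : ∀ (n : ℕ) (u : ℝ), 0 ≤ u → u ≤ p1 + p2 →
      x ((n : ℝ) * (p1 + p2) + u) = profile p1 a1 a2 z u := fun n u h0 h1 =>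
    eq_profile_all hx ha1 ha2 hp2 hz0 hshape1 hshape2 hshape3 hbz n h0 h1
  refine ⟨fun t ht => ?_, ?_, fun n => ?_⟩
  · obtain ⟨n, hn⟩ : ∃ n : ℕ, n = ⌊t / (p1 + p2)⌋₊ := ⟨_, rfl⟩
    have h1 : (n : ℝ) * (p1 + p2) ≤ t := by
      rw [← le_div_iff₀ hT0, hn]
      exact Nat.floor_le (by positivity)
    have h2 : t < ((n : ℝ) + 1) * (p1 + p2) := by
      rw [← div_lt_iff₀ hT0, hn]
      exact Nat.lt_floor_add_one _
    have h3 := hall n (t - n * (p1 + p2)) (by linarith) (by linarith)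
    have h4 := hall (n + 1) (t - n * (p1 + p2)) (by linarith) (by linarith)
    rw [add_sub_cancel] at h3
    rw [h3, ← h4]
    congr 1
    push_cast
    ring
  · exact slowlyOscillating_of_profile hz0 hshape3 hall (fun u => profile_neg_left ha1)
      profile_zero_left (fun u => profile_pos ha1 hshape2) (profile_zero_right hshape2)
      (fun u => profile_neg_right ha1 ha2 hz0 hshape2 hbz)
  · have hset : {s ∈ Ioc ((n : ℝ) * (p1 + p2)) (((n : ℝ) + 1) * (p1 + p2)) | x s = 0}
        = {(n : ℝ) * (p1 + p2) + z, (n : ℝ) * (p1 + p2) + (z + 2)} := by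
      ext s
      simp only [mem_ofPred_eq, mem_Ioc, mem_insert_iff, mem_singleton_iff]
      constructor
      · rintro ⟨⟨h1, h2⟩, h3⟩
        have h4 := hall n (s - n * (p1 + p2)) (by linarith) (by linarith)
        rw [add_sub_cancel, h3] at h4
        rcases lt_trichotomy (s - n * (p1 + p2)) z with h5 | h5 | h5
        · linarith [profile_neg_left (p1 := p1) (a2 := a2) ha1 h5]
        · left; linarith
        · rcases lt_trichotomy (s - n * (p1 + p2)) (z + 2) with h6 | h6 | h6
          · linarith [profile_pos (a2 := a2) ha1 hshape2 h5 h6]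
          · right; linarith
          · linarith [profile_neg_right ha1 ha2 hz0 hshape2 hbz h6 (by linarith)]
      · rintro (rfl | rfl)
        · refine ⟨⟨by linarith, by linarith⟩, ?_⟩
          rw [hall n z (by linarith) (by linarith), profile_zero_left]
        · refine ⟨⟨by linarith, by linarith⟩, ?_⟩
          rw [hall n (z + 2) (by linarith) (by linarith), profile_zero_right hshape2]
    rw [hset]
    exact encard_pair (by intro h0; linarith)
end

section
/- Let h < 0, set t₁ := −h/a₁, k := 1 − 2a₂/a₁, and d := a₁p₁ + a₂(2 − 2p₁ − p₂). Assume p₁ − 1 ≤ t₁ ≤ p₁, p₂ ≥ 1, and k·h + d > 0. Then the solution x(·,h) with constant initial function ≡ h has exactly one zero in (0, T], located at t₁, satisfies x(t,h) > 0 for all t ∈ (t₁, T], and x(T,h) = k·h + d. -/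
/-!
On `[0, p₁)` the slope of `x` is at most `a₁` and on `[p₁, T)` it is at least `-a₂`, whatever the
sign of the delayed argument (`norm_sub_le_of_solution`). These two a priori bounds replace a
step-by-step bootstrap: the first shows `x < 0` on `[-1, t₁)`, so the slope is exactly `A₀` on
`[0, t₁ + 1)`; this makes `x` vanish at `t₁` and positive on `(t₁, t₁ + 1]`. The second bounds `x`
on `[t₁ + 1, T]` below by the line of slope `-a₂`, whose value at `T` is `k h + d > 0`. Hence `x`
is positive there, and then the slope is exactly `-a₂` on `(t₁ + 1, T)`, so the bound is attained.
The exact increments come from `eq_of_solution`.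
-/

open Set Filter

lemma f0_neg {y : ℝ} (h : y < 0) : f0 y = 1 := by
  simp [f0, Real.sign_of_neg h]

lemma f0_pos {y : ℝ} (h : 0 < y) : f0 y = -1 := by
  simp [f0, Real.sign_of_pos h]

lemma rmod_eq_self {T t : ℝ} (h0 : 0 ≤ t) (h1 : t < T) : rmod T t = t := by
  have hT : 0 < T := by linarith
  have : ⌊t / T⌋ = 0 := by
    rw [Int.floor_eq_zero_iff]
    exact ⟨by positivity, (div_lt_one hT).2 h1⟩
  simp [rmod, this]

lemma A0_left {p1 p2 a1 a2 t : ℝ} (hp2 : 0 < p2) (h0 : 0 ≤ t) (h1 : t < p1) :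
    A0 p1 p2 a1 a2 t = a1 := by
  unfold A0
  rw [rmod_eq_self h0 (by linarith), if_pos h1]

lemma A0_right {p1 p2 a1 a2 t : ℝ} (hp1 : 0 < p1) (h0 : p1 ≤ t) (h1 : t < p1 + p2) :
    A0 p1 p2 a1 a2 t = a2 := by
  unfold A0
  rw [rmod_eq_self (by linarith) h1, if_neg (by linarith)]

/-- The right-hand side of the equation is bounded and measurable along any solution. -/
lemma integrable_rhs {p1 p2 a1 a2 h : ℝ} {x : ℝ → ℝ}
    (hx : IsSolutionC (A0 p1 p2 a1 a2) f0 h x) {u v : ℝ} (hu : 0 ≤ u) (hv : 0 ≤ v) :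
    IntervalIntegrable (fun s => A0 p1 p2 a1 a2 s * f0 (x (s - 1))) MeasureTheory.volume u v := by
  -- Freezing `x` to the left of `-1` gives a globally continuous function.
  have hc : Continuous (fun s => x (max (s - 1) (-1))) :=
    hx.1.comp_continuous (by fun_prop) (fun s => mem_Ici.2 (le_max_right _ _))
  have hm : Measurable (fun s => A0 p1 p2 a1 a2 s * f0 (x (max (s - 1) (-1)))) :=
    (measurable_A0 p1 p2 a1 a2).mul (measurable_f0.comp hc.measurable)
  have hi : IntervalIntegrable (fun s => A0 p1 p2 a1 a2 s * f0 (x (max (s - 1) (-1))))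
      MeasureTheory.volume u v := by
    refine (intervalIntegrable_const (c := max |a1| |a2|)).mono_fun hm.aestronglyMeasurable
      (Eventually.of_forall fun s => ?_)
    simp only [Real.norm_eq_abs, abs_mul]
    have hA : |A0 p1 p2 a1 a2 s| ≤ max |a1| |a2| := by
      unfold A0
      split_ifs
      · exact le_max_left _ _
      · exact le_max_right _ _
    calc _ ≤ |A0 p1 p2 a1 a2 s| * 1 :=
          mul_le_mul_of_nonneg_left (abs_f0_le _) (abs_nonneg _)
      _ ≤ _ := by rw [mul_one]; exact hA.trans (le_abs_self _)
  refine hi.congr fun s hs => ?_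
  have : 0 ≤ s := (le_min hu hv).trans hs.1.le
  simp only [max_eq_left (by linarith : (-1 : ℝ) ≤ s - 1)]

lemma sub_eq_integral {p1 p2 a1 a2 h : ℝ} {x : ℝ → ℝ}
    (hx : IsSolutionC (A0 p1 p2 a1 a2) f0 h x) {u v : ℝ} (hu : 0 ≤ u) (huv : u ≤ v) :
    x v - x u = ∫ s in Ioo u v, A0 p1 p2 a1 a2 s * f0 (x (s - 1)) := by
  rw [← MeasureTheory.integral_Ioc_eq_integral_Ioo, ← intervalIntegral.integral_of_le huv,
    hx.2.2 v (hu.trans huv), hx.2.2 u hu,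
    ← intervalIntegral.integral_interval_sub_left
      (integrable_rhs hx le_rfl (hu.trans huv)) (integrable_rhs hx le_rfl hu)]
  ring

/-- A priori bound: on an interval where `A₀ = c`, a solution is `c`-Lipschitz. -/
lemma norm_sub_le_of_solution {p1 p2 a1 a2 h : ℝ} {x : ℝ → ℝ}
    (hx : IsSolutionC (A0 p1 p2 a1 a2) f0 h x) {u v c : ℝ} (hu : 0 ≤ u) (huv : u ≤ v)
    (hc : 0 ≤ c) (hA : ∀ s ∈ Ioo u v, A0 p1 p2 a1 a2 s = c) :
    |x v - x u| ≤ c * (v - u) := by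
  rw [sub_eq_integral hx hu huv]
  have := MeasureTheory.norm_setIntegral_le_of_norm_le_const (μ := MeasureTheory.volume)
    (s := Ioo u v) (f := fun s => A0 p1 p2 a1 a2 s * f0 (x (s - 1))) (C := c) (by simp)
    (fun s hs => by
      rw [hA s hs, Real.norm_eq_abs, abs_mul, abs_of_nonneg hc]
      exact mul_le_of_le_one_right hc (abs_f0_le _))
  simpa [huv] using this

lemma eq_of_solution {p1 p2 a1 a2 h : ℝ} {x : ℝ → ℝ}
    (hx : IsSolutionC (A0 p1 p2 a1 a2) f0 h x) {u v c e : ℝ} (hu : 0 ≤ u) (huv : u ≤ v)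
    (hA : ∀ s ∈ Ioo u v, A0 p1 p2 a1 a2 s = c) (hf : ∀ s ∈ Ioo u v, f0 (x (s - 1)) = e) :
    x v = x u + c * e * (v - u) := by
  have h1 := sub_eq_integral hx hu huv
  rw [MeasureTheory.setIntegral_congr_fun (g := fun _ => c * e) measurableSet_Ioo
    (fun s hs => by simp only [hA s hs, hf s hs])] at h1
  simp [huv] at h1
  linarith

/-- for `h < 0` with `t₁ = -h/a₁`, `k = 1 - 2a₂/a₁`, `d = a₁p₁ + a₂(2-2p₁-p₂)`,
under `p₁ - 1 ≤ t₁ ≤ p₁`, `p₂ ≥ 1`, `k·h + d > 0`, the solution `x(·,h)` has exactly one zero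
in `(0,T]`, located at `t₁`, is positive on `(t₁,T]`, and `x(T,h) = k·h + d`. -/
theorem stmt11 (p1 p2 a1 a2 h k d : ℝ) (hp1 : 0 < p1) (hp2 : 0 < p2) (ha1 : 0 < a1)
    (ha2 : 0 < a2) (hT : 1 < p1 + p2) (hh : h < 0)
    (hk : k = 1 - 2 * a2 / a1) (hd : d = a1 * p1 + a2 * (2 - 2 * p1 - p2))
    (hshape1 : p1 - 1 ≤ -h / a1) (hshape2 : -h / a1 ≤ p1) (hp2' : 1 ≤ p2)
    (hkd : 0 < k * h + d)
    (x : ℝ → ℝ) (hx : IsSolutionC (A0 p1 p2 a1 a2) f0 h x) :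
    {s ∈ Ioc (0 : ℝ) (p1 + p2) | x s = 0} = {-h / a1} ∧
    (∀ t ∈ Ioc (-h / a1) (p1 + p2), 0 < x t) ∧
    x (p1 + p2) = k * h + d := by
  obtain ⟨t1, ht1⟩ : ∃ t1, t1 = -h / a1 := ⟨_, rfl⟩
  rw [← ht1] at hshape1 hshape2 ⊢
  have hh1 : h = -(a1 * t1) := by rw [ht1]; field_simp
  have ht1p : 0 < t1 := by rw [ht1]; exact div_pos (by linarith) ha1
  have hkh : k * h + d = h + a1 * p1 + a2 * (2 * t1 + 2 - 2 * p1 - p2) := by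
    rw [hk, hd, hh1]; field_simp; ring
  have hx0 : x 0 = h := hx.2.1 0 (by simp)
  have hneg : ∀ t, -1 ≤ t → t < t1 → x t < 0 := by
    intro t ht htt
    rcases le_total t 0 with h0 | h0
    · rw [hx.2.1 t ⟨ht, h0⟩]; exact hh
    · have := norm_sub_le_of_solution hx le_rfl h0 ha1.le
        (fun s hs => A0_left hp2 hs.1.le (by linarith [hs.2]))
      have h2 := (abs_le.1 this).2
      have h3 : a1 * t < a1 * t1 := mul_lt_mul_of_pos_left htt ha1
      linarith
  have hf1 : ∀ s, 0 < s → s < t1 + 1 → f0 (x (s - 1)) = 1 := fun s h0 h1 =>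
    f0_neg (hneg _ (by linarith) (by linarith))
  have hxa : ∀ t, 0 ≤ t → t ≤ p1 → x t = h + a1 * t := by
    intro t h0 h1
    have := eq_of_solution hx le_rfl h0
      (fun s hs => A0_left hp2 hs.1.le (by linarith [hs.2]))
      (fun s hs => hf1 s hs.1 (by linarith [hs.2]))
    rw [this, hx0]; ring
  have hxb : ∀ t, p1 ≤ t → t ≤ t1 + 1 → x t = h + a1 * p1 + a2 * (t - p1) := by
    intro t h0 h1
    have := eq_of_solution hx hp1.le h0
      (fun s hs => A0_right hp1 hs.1.le (by linarith [hs.2]))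
      (fun s hs => hf1 s (by linarith [hs.1]) (by linarith [hs.2]))
    rw [this, hxa p1 hp1.le le_rfl]; ring
  have hpt : a1 * t1 ≤ a1 * p1 := mul_le_mul_of_nonneg_left hshape2 ha1.le
  have hpos : ∀ t ∈ Ioc t1 (p1 + p2), 0 < x t := by
    rintro t ⟨h0, h1⟩
    rcases le_total t p1 with h2 | h2
    · rw [hxa t (by linarith) h2]
      have : a1 * t1 < a1 * t := mul_lt_mul_of_pos_left h0 ha1
      linarith
    rcases le_total t (t1 + 1) with h3 | h3
    · rw [hxb t h2 h3]
      -- If `t = p₁` then `t₁ < p₁`; otherwise the `a₂` term is positive.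
      rcases h2.eq_or_lt with h4 | h4
      · have : a1 * t1 < a1 * p1 := mul_lt_mul_of_pos_left (by linarith) ha1
        rw [← h4]; linarith
      · have : 0 < a2 * (t - p1) := mul_pos ha2 (by linarith)
        linarith
    · have h4 := norm_sub_le_of_solution hx (by linarith : 0 ≤ t1 + 1) h3 ha2.le
        (fun s hs => A0_right hp1 (by linarith [hs.1]) (by linarith [hs.2]))
      have h5 := (abs_le.1 h4).1
      rw [hxb (t1 + 1) (by linarith) le_rfl] at h5
      have h6 : a2 * t ≤ a2 * (p1 + p2) := mul_le_mul_of_nonneg_left h1 ha2.le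
      linarith
  refine ⟨?_, hpos, ?_⟩
  · ext s
    simp only [mem_ofPred_eq, mem_singleton_iff]
    constructor
    · rintro ⟨⟨h0, h1⟩, h2⟩
      rcases lt_trichotomy s t1 with h3 | h3 | h3
      · exact absurd h2 (hneg s (by linarith) h3).ne
      · exact h3
      · exact absurd h2 (hpos s ⟨h3, h1⟩).ne'
    · rintro rfl
      refine ⟨⟨ht1p, by linarith⟩, ?_⟩
      rw [hxa s ht1p.le hshape2]; linarith
  · have := eq_of_solution hx (by linarith : 0 ≤ t1 + 1) (by linarith : t1 + 1 ≤ p1 + p2)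
      (fun s hs => A0_right hp1 (by linarith [hs.1]) hs.2)
      (fun s hs => f0_pos (hpos (s - 1) ⟨by linarith [hs.1], by linarith [hs.2]⟩))
    rw [this, hxb (t1 + 1) (by linarith) le_rfl, hkh]; ring
end
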